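/- Let A be an n-by-n reciprocal matrix, let w be a positive n-vector efficient for A, and let D be an n-by-n diagonal matrix with positive diagonal entries d_1, …, d_n. Then the matrix DAD^{-1} (with (i,j) entry d_i·a_ij/d_j) is reciprocal and the vector Dw (with i-th entry d_i·w_i) is efficient for DAD^{-1}. -/

import Mathlib

/-- An n-by-n positive matrix is reciprocal if `A j i = 1 / A i j` for all `i, j`. -/
def Reciprocal {n : ℕ} (A : Matrix (Fin n) (Fin n) ℝ) : Prop :=
  (∀ i j, 0 < A i j) ∧ ∀ i j, A j i = 1 / A i j

/-- A positive vector `w` is efficient for a reciprocal matrix `A` if every positive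
vector `v` with `|v i / v j - A i j| ≤ |w i / w j - A i j|` entrywise is a positive
scalar multiple of `w`. -/
def Efficient {n : ℕ} (A : Matrix (Fin n) (Fin n) ℝ) (w : Fin n → ℝ) : Prop :=
  ∀ v : Fin n → ℝ, (∀ i, 0 < v i) →
    (∀ i j, |v i / v j - A i j| ≤ |w i / w j - A i j|) →
    ∃ c : ℝ, 0 < c ∧ v = fun i => c * w i

/-!
Writing a positive vector as `v = D u`, the `(i, j)` error of `v` for `D A D⁻¹` is `d i / d j`
times the error of `u` for `A`. The same factor appears for `D w`, so `v` competes with `D w`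
exactly when `u` competes with `w`.
-/

section ScaledError

variable {K : Type*} [Field K]

lemma mul_div_mul_sub_mul_div (p q x y a : K) :
    p * x / (q * y) - p * a / q = p / q * (x / y - a) := by
  rw [mul_div_mul_comm, mul_div_right_comm p a q, mul_sub]

lemma abs_mul_div_mul_sub_le_abs_mul_div_mul_sub_iff [LinearOrder K] [IsStrictOrderedRing K]
    {p q : K} (hp : p ≠ 0) (hq : q ≠ 0) (x y x' y' a : K) :
    |p * x / (q * y) - p * a / q| ≤ |p * x' / (q * y') - p * a / q| ↔
      |x / y - a| ≤ |x' / y' - a| := by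
  have scale_pos : 0 < |p / q| := abs_pos.mpr (div_ne_zero hp hq)
  rw [mul_div_mul_sub_mul_div, mul_div_mul_sub_mul_div, abs_mul, abs_mul,
    mul_le_mul_iff_right₀ scale_pos]

end ScaledError

section DiagonalSimilarity

variable {n : ℕ} {A : Matrix (Fin n) (Fin n) ℝ} {d : Fin n → ℝ}

lemma Reciprocal.diagonal_similarity (hA : Reciprocal A) (hd : ∀ i, 0 < d i) :
    Reciprocal (fun i j => d i * A i j / d j) := by
  refine ⟨fun i j => div_pos (mul_pos (hd i) (hA.1 i j)) (hd j), fun i j => ?_⟩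
  calc d j * A j i / d i = d j * (1 / A i j) / d i := by rw [hA.2 i j]
    _ = d j / (d i * A i j) := by rw [mul_one_div, div_div, mul_comm (A i j)]
    _ = 1 / (d i * A i j / d j) := (one_div_div _ _).symm

lemma Efficient.diagonal_similarity {w : Fin n → ℝ} (hw : Efficient A w) (hd : ∀ i, 0 < d i) :
    Efficient (fun i j => d i * A i j / d j) (fun i => d i * w i) := by
  intro v hv v_le
  obtain ⟨u, rfl⟩ : ∃ u : Fin n → ℝ, v = fun i => d i * u i :=
    ⟨fun i => v i / d i, funext fun i => (mul_div_cancel₀ (v i) (hd i).ne').symm⟩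
  have u_pos (i : Fin n) : 0 < u i := pos_of_mul_pos_right (hv i) (hd i).le
  have u_le (i j : Fin n) : |u i / u j - A i j| ≤ |w i / w j - A i j| :=
    (abs_mul_div_mul_sub_le_abs_mul_div_mul_sub_iff (hd i).ne' (hd j).ne' ..).mp (v_le i j)
  obtain ⟨c, hc, rfl⟩ := hw u u_pos u_le
  exact ⟨c, hc, funext fun i => mul_left_comm (d i) c (w i)⟩

end DiagonalSimilarity

/-- Efficiency is preserved by positive diagonal similarity. -/
theorem stmt_2 {n : ℕ} (A : Matrix (Fin n) (Fin n) ℝ) (hA : Reciprocal A)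
    (w : Fin n → ℝ) (hw : ∀ i, 0 < w i) (hweff : Efficient A w)
    (d : Fin n → ℝ) (hd : ∀ i, 0 < d i) :
    Reciprocal (fun i j => d i * A i j / d j) ∧
      Efficient (fun i j => d i * A i j / d j) (fun i => d i * w i) :=
  ⟨hA.diagonal_similarity hd, hweff.diagonal_similarity hd⟩
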